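/- Fix T > 0, M > 0, and sequences (η_k)_{k≥1} and (h_k)_{k≥1} of positive real numbers. Let K be the set of all f ∈ L²((0,1); C([0,T],ℝ)) such that: (L1) ∫₀¹ ‖f(u)‖²_{C[0,T]} du ≤ M; (L2) for every k ≥ 1, ∫₀¹ sup{|f(u)(t₂) − f(u)(t₁)| : t₁, t₂ ∈ [0,T], |t₂ − t₁| < η_k} du ≤ 1/k; (L3) for every k ≥ 1 and every h ∈ (0, h_k), ∫₀^{1−h} ‖f(u+h) − f(u)‖²_{C[0,T]} du ≤ 1/k. Then K is a compact subset of L²((0,1); C([0,T],ℝ)). -/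

import Mathlib

open MeasureTheory

/-!
Kolmogorov–Riesz compactness in the vector-valued form of Simon. If the translations of `f` by less
than `1 / N` move it little in `L^p`, then `f` is `L^p`-close to the step function of its averages
over the `N` cells of length `1 / N`: by Jensen, the error at `u` is at most the mean of
`‖f u - f v‖ ^ p` over the cell of `u`, and averaging over `u` and `v` within distance `1 / N` is
averaging over translations. So a set with uniformly small translations is totally bounded as soon
as its integrals over intervals are. For values in `C(X, F)` this follows from Arzelà–Ascoli,
because the modulus of continuity of an integral is at most the integral of the modulus. Closedness
is Fatou's lemma along an almost everywhere convergent subsequence.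
-/

open Filter Metric Set Topology
open scoped ENNReal

section TotallyBounded

theorem totallyBounded_of_forall_exists_dist_lt {α : Type*} [PseudoMetricSpace α] {S : Set α}
    (h : ∀ ε > 0, ∃ B, TotallyBounded B ∧ ∀ x ∈ S, ∃ y ∈ B, dist x y < ε) : TotallyBounded S := by
  refine Metric.totallyBounded_iff.2 fun ε hε => ?_
  obtain ⟨B, hB, hSB⟩ := h (ε / 2) (half_pos hε)
  obtain ⟨t, ht, hBt⟩ := Metric.totallyBounded_iff.1 hB (ε / 2) (half_pos hε)
  refine ⟨t, ht, fun x hx => ?_⟩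
  obtain ⟨y, hy, hxy⟩ := hSB x hx
  obtain ⟨z, hz, hyz⟩ := mem_iUnion₂.1 (hBt hy)
  exact mem_iUnion₂.2 ⟨z, hz, (dist_triangle x y z).trans_lt (by linarith [mem_ball.1 hyz])⟩

theorem totallyBounded_univ_pi {ι : Type*} {E : ι → Type*} [∀ i, UniformSpace (E i)]
    {s : ∀ i, Set (E i)} (hs : ∀ i, TotallyBounded (s i)) : TotallyBounded (univ.pi s) := by
  refine totallyBounded_iff_ultrafilter.2 fun f hf => (cauchy_pi_iff' _).2 fun i => ?_
  refine totallyBounded_iff_ultrafilter.1 (hs i) (f.map (Function.eval i)) ?_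
  exact (map_mono hf).trans (tendsto_principal_principal.2 fun c hc => hc i (mem_univ i))

theorem totallyBounded_of_norm_le_of_equicontinuous {X F : Type*}
    [TopologicalSpace X] [CompactSpace X] [NormedAddCommGroup F] [ProperSpace F]
    {A : Set C(X, F)} {R : ℝ}
    (hR : ∀ g ∈ A, ‖g‖ ≤ R) (hA : Equicontinuous ((↑) : A → X → F)) : TotallyBounded A := by
  let e := ContinuousMap.isometryEquivBoundedOfCompact X F
  have hcpt : IsCompact (closure (e '' A)) := by
    refine BoundedContinuousFunction.arzela_ascoli (closedBall 0 R) (isCompact_closedBall _ _) _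
      ?_ ?_
    · rintro _ x ⟨g, hg, rfl⟩
      exact mem_closedBall_zero_iff.2 ((g.norm_coe_le_norm x).trans (hR g hg))
    · rintro x U hU
      filter_upwards [hA x U hU] with y hy
      rintro ⟨_, g, hg, rfl⟩
      exact hy ⟨g, hg⟩
  exact (totallyBounded_image_iff e.isometry.isUniformInducing).1
    (hcpt.totallyBounded.subset subset_closure)

end TotallyBounded

section Measure

variable {α β E : Type*} [MeasurableSpace α] [MeasurableSpace β] {μ : Measure α} {ν : Measure β}
  [NormedAddCommGroup E] {p : ℝ≥0∞}

theorem integral_le_of_tendsto_ae {F : ℕ → α → ℝ} {G : α → ℝ} {c : ℝ}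
    (hF : ∀ n, Integrable (F n) μ) (hF0 : ∀ n, 0 ≤ᵐ[μ] F n) (hc : ∀ n, ∫ x, F n x ∂μ ≤ c)
    (hlim : ∀ᵐ x ∂μ, Tendsto (fun n => F n x) atTop (𝓝 (G x))) : ∫ x, G x ∂μ ≤ c := by
  have hG : AEStronglyMeasurable G μ :=
    aestronglyMeasurable_of_tendsto_ae atTop (fun n => (hF n).1) hlim
  have hG0 : 0 ≤ᵐ[μ] G := by
    filter_upwards [hlim, ae_all_iff.2 hF0] with x hx hx0 using ge_of_tendsto' hx hx0
  rw [integral_eq_lintegral_of_nonneg_ae hG0 hG]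
  refine ENNReal.toReal_le_of_le_ofReal ((integral_nonneg_of_ae (hF0 0)).trans (hc 0)) ?_
  calc ∫⁻ x, ENNReal.ofReal (G x) ∂μ
      = ∫⁻ x, liminf (fun n => ENNReal.ofReal (F n x)) atTop ∂μ :=
        lintegral_congr_ae <| hlim.mono fun x hx => (ENNReal.tendsto_ofReal hx).liminf_eq.symm
    _ ≤ liminf (fun n => ∫⁻ x, ENNReal.ofReal (F n x) ∂μ) atTop :=
        lintegral_liminf_le' fun n => (hF n).1.aemeasurable.ennreal_ofReal
    _ ≤ ENNReal.ofReal c := by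
        refine liminf_le_of_frequently_le' (.of_forall fun n => ?_)
        rw [← ofReal_integral_eq_lintegral_ofReal (hF n) (hF0 n)]
        exact ENNReal.ofReal_le_ofReal (hc n)

theorem isClosed_setOf_integral_le [Fact (1 ≤ p)] {Φ : Lp E p μ → β → ℝ} (c : ℝ)
    (hint : ∀ f, Integrable (Φ f) ν) (hnonneg : ∀ f, 0 ≤ Φ f)
    (hlim : ∀ (g : ℕ → Lp E p μ) (f : Lp E p μ),
      (∀ᵐ x ∂μ, Tendsto (fun n => g n x) atTop (𝓝 (f x))) →
        ∀ᵐ y ∂ν, Tendsto (fun n => Φ (g n) y) atTop (𝓝 (Φ f y))) :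
    IsClosed {f | ∫ y, Φ f y ∂ν ≤ c} := by
  refine IsSeqClosed.isClosed fun g f hg hgf => ?_
  obtain ⟨ns, -, hns⟩ := (tendstoInMeasure_of_tendsto_Lp hgf).exists_seq_tendsto_ae
  exact integral_le_of_tendsto_ae (fun n => hint (g (ns n)))
    (fun n => .of_forall (hnonneg (g (ns n)))) (fun n => hg (ns n)) (hlim _ f hns)

theorem isClosed_setOf_integral_comp_le [Fact (1 ≤ p)] {φ : E → ℝ} (c : ℝ) (hφ : Continuous φ)
    (hφ0 : 0 ≤ φ) (hint : ∀ f : Lp E p μ, Integrable (fun x => φ (f x)) μ) :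
    IsClosed {f : Lp E p μ | ∫ x, φ (f x) ∂μ ≤ c} :=
  isClosed_setOf_integral_le c hint (fun f x => hφ0 (f x)) fun _ _ h =>
    h.mono fun _ hx => (hφ.tendsto _).comp hx

theorem memLp_comp_of_finite {ι : Type*} [Finite ι] [MeasurableSpace ι]
    [DiscreteMeasurableSpace ι] [IsFiniteMeasure μ] {φ : α → ι} (hφ : Measurable φ) (c : ι → E) :
    MemLp (c ∘ φ) p μ :=
  MemLp.of_discrete.comp_of_map hφ.aemeasurable

theorem uniformContinuous_toLp_comp {ι : Type*} [Finite ι] [MeasurableSpace ι]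
    [DiscreteMeasurableSpace ι] [IsFiniteMeasure μ] [Fact (1 ≤ p)] {φ : α → ι}
    (hφ : Measurable φ) :
    UniformContinuous fun c : ι → E => (memLp_comp_of_finite (p := p) (μ := μ) hφ c).toLp := by
  have := Fintype.ofFinite ι
  have hK : μ univ ^ p.toReal⁻¹ ≠ ∞ := by finiteness
  refine LipschitzWith.uniformContinuous (K := (μ univ ^ p.toReal⁻¹).toNNReal) fun c d => ?_
  rw [Lp.edist_toLp_toLp, ENNReal.coe_toNNReal hK, edist_dist, dist_eq_norm]
  exact eLpNorm_le_of_ae_bound (.of_forall fun x => norm_le_pi_norm (c - d) (φ x))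

section Average

variable [NormedSpace ℝ E] {q : ℝ}

theorem enorm_integral_rpow_le_lintegral [IsProbabilityMeasure μ] (hq : 1 ≤ q) {f : α → E}
    (hf : AEStronglyMeasurable f μ) : ‖∫ x, f x ∂μ‖ₑ ^ q ≤ ∫⁻ x, ‖f x‖ₑ ^ q ∂μ := by
  have hq0 : 0 < q := one_pos.trans_le hq
  rw [lintegral_rpow_enorm_eq_rpow_eLpNorm' hq0]
  gcongr
  calc ‖∫ x, f x ∂μ‖ₑ ≤ eLpNorm' f 1 μ := by
        simpa [eLpNorm'] using enorm_integral_le_lintegral_enorm f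
    _ ≤ eLpNorm' f q μ := eLpNorm'_le_eLpNorm'_of_exponent_le one_pos hq μ hf

theorem enorm_sub_average_rpow_le_laverage [CompleteSpace E] [IsFiniteMeasure μ] [NeZero μ]
    (hq : 1 ≤ q) {f : α → E} (hf : Integrable f μ) (a : E) :
    ‖a - ⨍ x, f x ∂μ‖ₑ ^ q ≤ ⨍⁻ x, ‖a - f x‖ₑ ^ q ∂μ := by
  have hfν : Integrable f ((μ univ)⁻¹ • μ) := hf.smul_measure (by simp [NeZero.ne])
  have hsub : a - ⨍ x, f x ∂μ = ⨍ x, (a - f x) ∂μ := by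
    conv_lhs => rw [← average_const μ a]
    exact (integral_sub (integrable_const a) hfν).symm
  rw [hsub]
  exact enorm_integral_rpow_le_lintegral hq (aestronglyMeasurable_const.sub hfν.1)

end Average

theorem edist_rpow_eq_lintegral [Fact (1 ≤ p)] (hp : p ≠ ∞) (f g : Lp E p μ) :
    edist f g ^ p.toReal = ∫⁻ x, ‖f x - g x‖ₑ ^ p.toReal ∂μ := by
  have hp0 : p ≠ 0 := (one_pos.trans_le Fact.out).ne'
  rw [Lp.edist_def, eLpNorm_eq_eLpNorm' hp0 hp,
    ← lintegral_rpow_enorm_eq_rpow_eLpNorm' (ENNReal.toReal_pos hp0 hp)]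
  rfl

end Measure

theorem lintegral_lintegral_ball_le {G : ℝ → ℝ → ℝ≥0∞} (hG : Measurable (Function.uncurry G))
    (hsymm : ∀ u v, G u v = G v u) {r : ℝ} {δ : ℝ≥0∞}
    (hδ : ∀ s ∈ Ioo 0 r, ∫⁻ u, G u (u + s) ≤ δ) :
    ∫⁻ u, ∫⁻ v in ball u r, G u v ≤ ENNReal.ofReal (2 * r) * δ := by
  have hneg (s : ℝ) : ∫⁻ u, G u (u + -s) = ∫⁻ u, G u (u + s) := by
    rw [← lintegral_add_right_eq_self _ s]
    simp only [add_neg_cancel_right, hsymm]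
  have htranslate (u : ℝ) : ∫⁻ v in ball u r, G u v = ∫⁻ s in ball 0 r, G u (u + s) := by
    have := (measurePreserving_add_left volume u).setLIntegral_comp_preimage_emb
      (measurableEmbedding_addLeft u) (G u) (ball u r)
    simpa using this.symm
  calc ∫⁻ u, ∫⁻ v in ball u r, G u v
      = ∫⁻ s in ball 0 r, ∫⁻ u, G u (u + s) := by
        simp only [htranslate]
        refine lintegral_lintegral_swap (Measurable.aemeasurable ?_)
        exact hG.comp (measurable_fst.prodMk (measurable_fst.add measurable_snd))
    _ ≤ ∫⁻ _ in ball (0 : ℝ) r, δ := by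
        refine lintegral_mono_ae ?_
        filter_upwards [ae_restrict_mem measurableSet_ball, Measure.ae_ne _ (0 : ℝ)] with s hs hs0
        rw [mem_ball_zero_iff, Real.norm_eq_abs, abs_lt] at hs
        rcases hs0.lt_or_gt with hs_neg | hs_pos
        · rw [← neg_neg s, hneg]
          exact hδ (-s) ⟨neg_pos.2 hs_neg, neg_lt.1 hs.1⟩
        · exact hδ s ⟨hs_pos, hs.2⟩
    _ = ENNReal.ofReal (2 * r) * δ := by
        rw [setLIntegral_const, Real.volume_ball, mul_comm]

section Cells

variable {N : ℕ} {E : Type*} [NormedAddCommGroup E] {q : ℝ}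

/-- The `j`-th of the `N` open intervals of length `1 / N` that partition `(0, 1)` up to finitely
many points, counted from `0`. -/
def unitCell (j : Fin N) : Set ℝ := Ioo ((j : ℝ) / N) (((j : ℝ) + 1) / N)

/-- The index of the cell of `(0, 1)` containing `u` or having `u` as its left endpoint. It is
a meaningless index for `u` outside `(0, 1)`. -/
noncomputable def cellIndex (N : ℕ) [NeZero N] (u : ℝ) : Fin N := Fin.ofNat N ⌊(N : ℝ) * u⌋₊

/-- The average of `f` over the `j`-th cell of `(0, 1)`, so that `cellAverage f ∘ cellIndex N` is
the step function approximating `f`. -/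
noncomputable def cellAverage [NormedSpace ℝ E] (f : ℝ → E) (j : Fin N) : E :=
  ⨍ v in unitCell j, f v

theorem unitCell_subset (j : Fin N) : unitCell j ⊆ Ioo 0 1 := by
  have hN : (0 : ℝ) < N := Nat.cast_pos.2 j.pos
  have hj : (j : ℝ) + 1 ≤ N := mod_cast j.isLt
  exact Ioo_subset_Ioo (by positivity) ((div_le_one hN).2 hj)

theorem volume_unitCell (j : Fin N) : volume (unitCell j) = (N : ℝ≥0∞)⁻¹ := by
  have hN : (0 : ℝ) < N := Nat.cast_pos.2 j.pos
  rw [unitCell, Real.volume_Ioo, ← sub_div, add_sub_cancel_left, one_div,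
    ENNReal.ofReal_inv_of_pos hN, ENNReal.ofReal_natCast]

theorem cellAverage_eq_smul_integral [NormedSpace ℝ E] (f : ℝ → E) (j : Fin N) :
    cellAverage f j = (N : ℝ) • ∫ v in unitCell j, f v := by
  rw [cellAverage, setAverage_eq, measureReal_def, volume_unitCell]
  simp

variable [NeZero N]

theorem measurable_cellIndex : Measurable (cellIndex N) :=
  (measurable_from_top (f := fun m : ℕ => Fin.ofNat N m)).comp
    (Nat.measurable_floor.comp (measurable_const_mul _))

theorem unitCell_cellIndex_subset_ball {u : ℝ} (hu : u ∈ Ioo 0 1) :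
    unitCell (cellIndex N u) ⊆ ball u (1 / N) := by
  have hN : (0 : ℝ) < N := Nat.cast_pos.2 (NeZero.pos N)
  have hNu : 0 ≤ N * u := mul_nonneg hN.le hu.1.le
  have hlt : ⌊N * u⌋₊ < N := (Nat.floor_lt hNu).2 (mul_lt_of_lt_one_right hN hu.2)
  have hval : (cellIndex N u : ℕ) = ⌊N * u⌋₊ := Nat.mod_eq_of_lt hlt
  rw [unitCell, hval, Real.ball_eq_Ioo]
  refine Ioo_subset_Ioo ?_ ?_
  · rw [sub_le_iff_le_add, ← add_div, le_div_iff₀' hN]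
    exact (Nat.lt_floor_add_one _).le
  · rw [add_div]
    gcongr
    exact (div_le_iff₀' hN).2 (Nat.floor_le hNu)

theorem setLIntegral_setLIntegral_ball_enorm_sub_rpow_le {f : ℝ → E} (hf : StronglyMeasurable f)
    {r : ℝ} {δ : ℝ≥0∞}
    (hδ : ∀ s ∈ Ioo 0 r, ∫⁻ u in Ioo 0 (1 - s), ‖f (u + s) - f u‖ₑ ^ q ≤ δ) :
    ∫⁻ u in Ioo 0 1, ∫⁻ v in Ioo 0 1 ∩ ball u r, ‖f u - f v‖ₑ ^ q ≤
      ENNReal.ofReal (2 * r) * δ := by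
  let G (u v : ℝ) : ℝ≥0∞ :=
    (Ioo (0 : ℝ) 1 ×ˢ Ioo (0 : ℝ) 1).indicator (fun z => ‖f z.1 - f z.2‖ₑ ^ q) (u, v)
  have hG : Measurable (Function.uncurry G) :=
    (((hf.comp_measurable measurable_fst).sub
      (hf.comp_measurable measurable_snd)).enorm.pow_const q).indicator
        (measurableSet_Ioo.prod measurableSet_Ioo)
  have hsymm (u v : ℝ) : G u v = G v u := by
    simp only [G, indicator, mem_prod, enorm_sub_rev (f u), and_comm]
  have hshift (s : ℝ) (hs : s ∈ Ioo 0 r) : ∫⁻ u, G u (u + s) ≤ δ := by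
    refine le_trans ?_ (hδ s hs)
    rw [← lintegral_indicator measurableSet_Ioo]
    refine lintegral_mono fun u => ?_
    by_cases hu : u ∈ Ioo (0 : ℝ) 1 ∧ u + s ∈ Ioo (0 : ℝ) 1
    · have hus : u ∈ Ioo 0 (1 - s) := ⟨hu.1.1, lt_sub_iff_add_lt.2 hu.2.2⟩
      rw [indicator_of_mem hus, enorm_sub_rev]
      exact (indicator_of_mem (mk_mem_prod hu.1 hu.2) _).le
    · simp only [G, indicator_of_notMem (show (u, u + s) ∉ _ ×ˢ _ from hu), zero_le]
  have hset (u : ℝ) (hu : u ∈ Ioo 0 1) :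
      ∫⁻ v in Ioo 0 1 ∩ ball u r, ‖f u - f v‖ₑ ^ q = ∫⁻ v in ball u r, G u v := by
    rw [← setLIntegral_indicator measurableSet_Ioo]
    simp [G, indicator, mem_prod, mem_Ioo.1 hu]
  calc ∫⁻ u in Ioo 0 1, ∫⁻ v in Ioo 0 1 ∩ ball u r, ‖f u - f v‖ₑ ^ q
      = ∫⁻ u in Ioo 0 1, ∫⁻ v in ball u r, G u v := setLIntegral_congr_fun measurableSet_Ioo hset
    _ ≤ ∫⁻ u, ∫⁻ v in ball u r, G u v := setLIntegral_le_lintegral _ _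
    _ ≤ ENNReal.ofReal (2 * r) * δ := lintegral_lintegral_ball_le hG hsymm hshift

variable [NormedSpace ℝ E] [CompleteSpace E]

theorem enorm_sub_cellAverage_rpow_le (hq : 1 ≤ q) {f : ℝ → E} (hf : IntegrableOn f (Ioo 0 1))
    {u : ℝ} (hu : u ∈ Ioo 0 1) :
    ‖f u - cellAverage f (cellIndex N u)‖ₑ ^ q ≤
      N * ∫⁻ v in Ioo 0 1 ∩ ball u (1 / N), ‖f u - f v‖ₑ ^ q := by
  set I := unitCell (cellIndex N u)
  have hvol : volume I = (N : ℝ≥0∞)⁻¹ := volume_unitCell _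
  have : IsFiniteMeasure (volume.restrict I) := ⟨by simp [hvol, NeZero.pos]⟩
  have : NeZero (volume.restrict I) := ⟨by simp [← Measure.measure_univ_eq_zero, hvol]⟩
  calc ‖f u - cellAverage f (cellIndex N u)‖ₑ ^ q
      ≤ ⨍⁻ v in I, ‖f u - f v‖ₑ ^ q ∂volume :=
        enorm_sub_average_rpow_le_laverage hq (hf.mono_set (unitCell_subset _)) (f u)
    _ = N * ∫⁻ v in I, ‖f u - f v‖ₑ ^ q := by
        rw [setLAverage_eq, hvol, div_eq_mul_inv, inv_inv, mul_comm]
    _ ≤ N * ∫⁻ v in Ioo 0 1 ∩ ball u (1 / N), ‖f u - f v‖ₑ ^ q := by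
        gcongr
        exact subset_inter (unitCell_subset _) (unitCell_cellIndex_subset_ball hu)

theorem setLIntegral_enorm_sub_cellAverage_rpow_le (hq : 1 ≤ q) {f : ℝ → E}
    (hf : StronglyMeasurable f) (hfi : IntegrableOn f (Ioo 0 1)) {δ : ℝ≥0∞}
    (hδ : ∀ s ∈ Ioo (0 : ℝ) (1 / N), ∫⁻ u in Ioo 0 (1 - s), ‖f (u + s) - f u‖ₑ ^ q ≤ δ) :
    ∫⁻ u in Ioo 0 1, ‖f u - cellAverage f (cellIndex N u)‖ₑ ^ q ≤ 2 * δ := by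
  have hN : (0 : ℝ) < N := Nat.cast_pos.2 (NeZero.pos N)
  calc ∫⁻ u in Ioo 0 1, ‖f u - cellAverage f (cellIndex N u)‖ₑ ^ q
      ≤ ∫⁻ u in Ioo 0 1, N * ∫⁻ v in Ioo 0 1 ∩ ball u (1 / N), ‖f u - f v‖ₑ ^ q :=
        setLIntegral_mono' measurableSet_Ioo fun u hu => enorm_sub_cellAverage_rpow_le hq hfi hu
    _ = N * ∫⁻ u in Ioo 0 1, ∫⁻ v in Ioo 0 1 ∩ ball u (1 / N), ‖f u - f v‖ₑ ^ q :=
        lintegral_const_mul' _ _ (ENNReal.natCast_ne_top N)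
    _ ≤ N * (ENNReal.ofReal (2 * (1 / N)) * δ) := by
        gcongr
        exact setLIntegral_setLIntegral_ball_enorm_sub_rpow_le hf hδ
    _ = 2 * δ := by
        rw [← mul_assoc, ← ENNReal.ofReal_natCast, ← ENNReal.ofReal_mul hN.le,
          show (N : ℝ) * (2 * (1 / N)) = 2 by field_simp, ENNReal.ofReal_ofNat]

end Cells

section Translation

variable {E : Type*} [NormedAddCommGroup E] {p : ℝ≥0∞} {a b s : ℝ}

theorem measurePreserving_add_right_Ioo (a b s : ℝ) :
    MeasurePreserving (· + s) (volume.restrict (Ioo a (b - s)))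
      (volume.restrict (Ioo (a + s) b)) := by
  simpa using (measurePreserving_add_right volume s).restrict_preimage
    (measurableSet_Ioo (a := a + s) (b := b))

theorem ae_restrict_and_translate {P : ℝ → Prop} (h : ∀ᵐ u ∂volume.restrict (Ioo a b), P u)
    (hs : 0 ≤ s) : ∀ᵐ u ∂volume.restrict (Ioo a (b - s)), P u ∧ P (u + s) := by
  have hleft : Ioo a (b - s) ⊆ Ioo a b := Ioo_subset_Ioo_right (sub_le_self b hs)
  have hright : Ioo (a + s) b ⊆ Ioo a b := Ioo_subset_Ioo_left (le_add_of_nonneg_right hs)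
  exact (ae_restrict_of_ae_restrict_of_subset hleft h).and <|
    (measurePreserving_add_right_Ioo a b s).quasiMeasurePreserving.ae
      (ae_restrict_of_ae_restrict_of_subset hright h)

theorem memLp_translate_sub {f : ℝ → E} (hf : MemLp f p (volume.restrict (Ioo a b)))
    (hs : 0 ≤ s) : MemLp (fun u => f (u + s) - f u) p (volume.restrict (Ioo a (b - s))) := by
  have hleft : Ioo a (b - s) ⊆ Ioo a b := Ioo_subset_Ioo_right (sub_le_self b hs)
  have hright : Ioo (a + s) b ⊆ Ioo a b := Ioo_subset_Ioo_left (le_add_of_nonneg_right hs)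
  have hshift := (hf.mono_measure (Measure.restrict_mono_set _ hright)).comp_measurePreserving
    (measurePreserving_add_right_Ioo a b s)
  exact hshift.sub (hf.mono_measure (Measure.restrict_mono_set _ hleft))

end Translation

section Simon

variable {E : Type*} [NormedAddCommGroup E] [NormedSpace ℝ E] [CompleteSpace E]
  {p : ℝ≥0∞} [Fact (1 ≤ p)]

theorem edist_toLp_cellAverage_rpow_le (hp : p ≠ ∞) {N : ℕ} [NeZero N]
    (f : Lp E p (volume.restrict (Ioo (0 : ℝ) 1))) {δ : ℝ}
    (hδ : ∀ s ∈ Ioo (0 : ℝ) (1 / N),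
      ∫ u in Ioo 0 (1 - s), ‖f (u + s) - f u‖ ^ p.toReal ≤ δ) :
    edist f (memLp_comp_of_finite measurable_cellIndex (cellAverage (N := N) f)).toLp ^ p.toReal ≤
      2 * ENNReal.ofReal δ := by
  have hp1 : 1 ≤ p := Fact.out
  have hq : 1 ≤ p.toReal := by simpa using ENNReal.toReal_mono hp hp1
  have htrans (s : ℝ) (hs : s ∈ Ioo (0 : ℝ) (1 / N)) :
      ∫⁻ u in Ioo 0 (1 - s), ‖f (u + s) - f u‖ₑ ^ p.toReal ≤ ENNReal.ofReal δ := by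
    have hint := (memLp_translate_sub (Lp.memLp f) hs.1.le).integrable_norm_rpow
      (one_pos.trans_le hp1).ne' hp
    calc ∫⁻ u in Ioo 0 (1 - s), ‖f (u + s) - f u‖ₑ ^ p.toReal
        = ENNReal.ofReal (∫ u in Ioo 0 (1 - s), ‖f (u + s) - f u‖ ^ p.toReal) := by
          rw [ofReal_integral_eq_lintegral_ofReal hint (.of_forall fun u => by positivity)]
          refine lintegral_congr fun u => ?_
          rw [← ENNReal.ofReal_rpow_of_nonneg (norm_nonneg _) (by positivity), ofReal_norm]
      _ ≤ ENNReal.ofReal δ := ENNReal.ofReal_le_ofReal (hδ s hs)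
  rw [edist_rpow_eq_lintegral hp]
  refine (lintegral_congr_ae ?_).trans_le <| setLIntegral_enorm_sub_cellAverage_rpow_le hq
    (Lp.stronglyMeasurable f) ((Lp.memLp f).integrable hp1) htrans
  filter_upwards [(memLp_comp_of_finite (p := p) measurable_cellIndex
    (cellAverage (N := N) f)).coeFn_toLp] with u hu
  rw [hu, Function.comp_apply]

theorem totallyBounded_of_translation (hp : p ≠ ∞)
    {S : Set (Lp E p (volume.restrict (Ioo (0 : ℝ) 1)))}
    (hint : ∀ a b : ℝ, Ioo a b ⊆ Ioo 0 1 → TotallyBounded ((fun f => ∫ u in Ioo a b, f u) '' S))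
    (htrans : ∀ ε > 0, ∃ r > 0, ∀ f ∈ S, ∀ s ∈ Ioo 0 r,
      ∫ u in Ioo 0 (1 - s), ‖f (u + s) - f u‖ ^ p.toReal ≤ ε) :
    TotallyBounded S := by
  refine totallyBounded_of_forall_exists_dist_lt fun ε hε => ?_
  have hq : 0 < p.toReal := ENNReal.toReal_pos (one_pos.trans_le Fact.out).ne' hp
  have hεq : 0 < ε ^ p.toReal := Real.rpow_pos_of_pos hε _
  obtain ⟨r, hr, hS⟩ := htrans (ε ^ p.toReal / 4) (by positivity)
  obtain ⟨n, hn⟩ := exists_nat_one_div_lt hr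
  let approx (c : Fin (n + 1) → E) : Lp E p (volume.restrict (Ioo (0 : ℝ) 1)) :=
    (memLp_comp_of_finite measurable_cellIndex c).toLp
  have havg (j : Fin (n + 1)) : TotallyBounded ((fun f : Lp E p _ => cellAverage f j) '' S) := by
    have hcell : TotallyBounded ((fun f : Lp E p _ => ∫ v in unitCell j, f v) '' S) :=
      hint _ _ (unitCell_subset j)
    simpa only [image_image, cellAverage_eq_smul_integral] using
      hcell.image (uniformContinuous_const_smul ((n + 1 : ℕ) : ℝ))
  refine ⟨_, (totallyBounded_univ_pi havg).image
    (uniformContinuous_toLp_comp measurable_cellIndex), fun f hf => ?_⟩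
  refine ⟨approx (cellAverage f), mem_image_of_mem _ fun j _ => mem_image_of_mem _ hf, ?_⟩
  have hclose : edist f (approx (cellAverage f)) ^ p.toReal < ENNReal.ofReal ε ^ p.toReal := by
    calc edist f (approx (cellAverage f)) ^ p.toReal
        ≤ 2 * ENNReal.ofReal (ε ^ p.toReal / 4) :=
          edist_toLp_cellAverage_rpow_le hp f fun s hs =>
            hS f hf s ⟨hs.1, hs.2.trans (by exact_mod_cast hn)⟩
      _ = ENNReal.ofReal (2 * (ε ^ p.toReal / 4)) := by simp [ENNReal.ofReal_mul]
      _ < ENNReal.ofReal (ε ^ p.toReal) := by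
          rw [ENNReal.ofReal_lt_ofReal_iff hεq]
          linarith
      _ = ENNReal.ofReal ε ^ p.toReal := (ENNReal.ofReal_rpow_of_pos hε).symm
  exact edist_lt_ofReal.1 ((ENNReal.rpow_lt_rpow_iff hq).1 hclose)

end Simon

section Modulus

variable {X F : Type*} [PseudoMetricSpace X] [NormedAddCommGroup F] {δ : ℝ}

/-- The modulus of continuity of `g` at scale `δ`: the supremum of `‖g t₂ - g t₁‖` over pairs of
points at distance less than `δ`. The supremum is a real one, so it is meaningful for `g` bounded,
in particular on a compact domain. -/
noncomputable def modulusOfContinuity (δ : ℝ) (g : C(X, F)) : ℝ :=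
  sSup {x | ∃ t₁ t₂ : X, dist t₂ t₁ < δ ∧ x = ‖g t₂ - g t₁‖}

theorem modulusOfContinuity_nonneg (δ : ℝ) (g : C(X, F)) : 0 ≤ modulusOfContinuity δ g := by
  refine Real.sSup_nonneg ?_
  rintro _ ⟨t₁, t₂, -, rfl⟩
  exact norm_nonneg _

theorem modulusOfContinuity_le {g : C(X, F)} {c : ℝ} (hc : 0 ≤ c)
    (h : ∀ t₁ t₂, dist t₂ t₁ < δ → ‖g t₂ - g t₁‖ ≤ c) : modulusOfContinuity δ g ≤ c := by
  refine Real.sSup_le ?_ hc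
  rintro _ ⟨t₁, t₂, ht, rfl⟩
  exact h t₁ t₂ ht

variable [CompactSpace X]

theorem norm_apply_sub_le_two_mul_norm (g : C(X, F)) (s t : X) : ‖g t - g s‖ ≤ 2 * ‖g‖ := by
  simpa only [dist_eq_norm] using g.dist_le_two_norm t s

theorem norm_sub_le_modulusOfContinuity (g : C(X, F)) {t₁ t₂ : X} (h : dist t₂ t₁ < δ) :
    ‖g t₂ - g t₁‖ ≤ modulusOfContinuity δ g := by
  refine le_csSup ⟨2 * ‖g‖, ?_⟩ ⟨t₁, t₂, h, rfl⟩
  rintro _ ⟨s₁, s₂, -, rfl⟩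
  exact norm_apply_sub_le_two_mul_norm g s₁ s₂

theorem lipschitzWith_modulusOfContinuity (δ : ℝ) :
    LipschitzWith 2 (modulusOfContinuity δ : C(X, F) → ℝ) := by
  refine LipschitzWith.of_le_add_mul 2 fun g g' => modulusOfContinuity_le
    (add_nonneg (modulusOfContinuity_nonneg δ g') (by positivity)) fun t₁ t₂ ht => ?_
  calc ‖g t₂ - g t₁‖ = ‖(g' t₂ - g' t₁) + ((g - g') t₂ - (g - g') t₁)‖ := by
        simp only [ContinuousMap.sub_apply]
        congr 1
        abel
    _ ≤ ‖g' t₂ - g' t₁‖ + ‖(g - g') t₂ - (g - g') t₁‖ := norm_add_le _ _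
    _ ≤ modulusOfContinuity δ g' + 2 * dist g g' := by
        rw [dist_eq_norm]
        gcongr
        exacts [norm_sub_le_modulusOfContinuity g' ht, norm_apply_sub_le_two_mul_norm _ _ _]

theorem integrable_modulusOfContinuity {α : Type*} [MeasurableSpace α] {μ : Measure α}
    {f : α → C(X, F)} (hf : Integrable f μ) (δ : ℝ) :
    Integrable (fun x => modulusOfContinuity δ (f x)) μ := by
  refine (hf.norm.const_mul 2).mono'
    ((lipschitzWith_modulusOfContinuity δ).continuous.comp_aestronglyMeasurable hf.1)
    (.of_forall fun x => ?_)
  rw [Real.norm_of_nonneg (modulusOfContinuity_nonneg δ _)]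
  exact modulusOfContinuity_le (by positivity) fun t₁ t₂ _ =>
    norm_apply_sub_le_two_mul_norm (f x) t₁ t₂

theorem modulusOfContinuity_integral_le [NormedSpace ℝ F] [CompleteSpace F] {α : Type*}
    [MeasurableSpace α] {μ : Measure α} {f : α → C(X, F)} (hf : Integrable f μ) (δ : ℝ) :
    modulusOfContinuity δ (∫ x, f x ∂μ) ≤ ∫ x, modulusOfContinuity δ (f x) ∂μ := by
  refine modulusOfContinuity_le (integral_nonneg fun x => modulusOfContinuity_nonneg δ _)
    fun t₁ t₂ ht => ?_
  have heval (t : X) : Integrable (fun x => f x t) μ :=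
    (ContinuousMap.evalCLM ℝ t).integrable_comp hf
  rw [ContinuousMap.integral_apply hf, ContinuousMap.integral_apply hf,
    ← integral_sub (heval t₂) (heval t₁)]
  exact norm_integral_le_of_norm_le (integrable_modulusOfContinuity hf δ)
    (.of_forall fun x => norm_sub_le_modulusOfContinuity (f x) ht)

theorem equicontinuous_of_modulusOfContinuity_le {A : Set C(X, F)}
    (hA : ∀ ε > 0, ∃ δ > 0, ∀ g ∈ A, modulusOfContinuity δ g ≤ ε) :
    Equicontinuous ((↑) : A → X → F) := by
  refine (Metric.uniformEquicontinuous_iff.2 fun ε hε => ?_).equicontinuous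
  obtain ⟨δ, hδ, h⟩ := hA (ε / 2) (half_pos hε)
  refine ⟨δ, hδ, fun s t hst g => ?_⟩
  rw [dist_eq_norm]
  exact (norm_sub_le_modulusOfContinuity g.1 hst).trans_lt ((h g g.2).trans_lt (half_lt_self hε))

end Modulus

section Compactness

variable {X F : Type*} [PseudoMetricSpace X] [CompactSpace X] [NormedAddCommGroup F]
  [NormedSpace ℝ F] [ProperSpace F] {p : ℝ≥0∞} [Fact (1 ≤ p)]

theorem totallyBounded_of_modulusOfContinuity_of_translation (hp : p ≠ ∞)
    {S : Set (Lp C(X, F) p (volume.restrict (Ioo (0 : ℝ) 1)))} {R : ℝ}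
    (hR : ∀ f ∈ S, ∫ u in Ioo 0 1, ‖f u‖ ≤ R)
    (hmod : ∀ ε > 0, ∃ δ > 0, ∀ f ∈ S, ∫ u in Ioo 0 1, modulusOfContinuity δ (f u) ≤ ε)
    (htrans : ∀ ε > 0, ∃ r > 0, ∀ f ∈ S, ∀ s ∈ Ioo 0 r,
      ∫ u in Ioo 0 (1 - s), ‖f (u + s) - f u‖ ^ p.toReal ≤ ε) :
    TotallyBounded S := by
  refine totallyBounded_of_translation hp (fun a b hab => ?_) htrans
  have hf (f : Lp C(X, F) p (volume.restrict (Ioo (0 : ℝ) 1))) : IntegrableOn f (Ioo 0 1) :=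
    (Lp.memLp f).integrable Fact.out
  refine totallyBounded_of_norm_le_of_equicontinuous (R := R) ?_
    (equicontinuous_of_modulusOfContinuity_le fun ε hε => ?_)
  · rintro _ ⟨f, hfS, rfl⟩
    calc ‖∫ u in Ioo a b, f u‖ ≤ ∫ u in Ioo a b, ‖f u‖ := norm_integral_le_integral_norm _
      _ ≤ ∫ u in Ioo 0 1, ‖f u‖ :=
        setIntegral_mono_set (hf f).norm (.of_forall fun u => norm_nonneg _) hab.eventuallyLE
      _ ≤ R := hR f hfS
  · obtain ⟨δ, hδ, hS⟩ := hmod ε hε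
    refine ⟨δ, hδ, ?_⟩
    rintro _ ⟨f, hfS, rfl⟩
    calc modulusOfContinuity δ (∫ u in Ioo a b, f u)
        ≤ ∫ u in Ioo a b, modulusOfContinuity δ (f u) :=
          modulusOfContinuity_integral_le ((hf f).mono_set hab) δ
      _ ≤ ∫ u in Ioo 0 1, modulusOfContinuity δ (f u) :=
          setIntegral_mono_set (integrable_modulusOfContinuity (hf f) δ)
            (.of_forall fun u => modulusOfContinuity_nonneg δ _) hab.eventuallyLE
      _ ≤ ε := hS f hfS

end Compactness

theorem integral_norm_le_measureReal_add {α E : Type*} [MeasurableSpace α] {μ : Measure α}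
    [IsFiniteMeasure μ] [NormedAddCommGroup E] {q : ℝ} (hq : 1 ≤ q) {f : α → E}
    (hf : Integrable (fun x => ‖f x‖ ^ q) μ) :
    ∫ x, ‖f x‖ ∂μ ≤ μ.real univ + ∫ x, ‖f x‖ ^ q ∂μ := by
  have hpt (x : α) : ‖f x‖ ≤ 1 + ‖f x‖ ^ q := by
    rcases le_total ‖f x‖ 1 with h | h
    · exact h.trans (le_add_of_nonneg_right (by positivity))
    · exact (Real.self_le_rpow_of_one_le h hq).trans (le_add_of_nonneg_left zero_le_one)
  calc ∫ x, ‖f x‖ ∂μ ≤ ∫ x, (1 + ‖f x‖ ^ q) ∂μ :=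
        integral_mono_of_nonneg (.of_forall fun x => norm_nonneg _)
          ((integrable_const 1).add hf) (.of_forall hpt)
    _ = μ.real univ + ∫ x, ‖f x‖ ^ q ∂μ := by
        rw [integral_add (integrable_const 1) hf, integral_const, smul_eq_mul, mul_one]

theorem isClosed_setOf_integral_translate_sub_le {E : Type*} [NormedAddCommGroup E] {p : ℝ≥0∞}
    [Fact (1 ≤ p)] (hp : p ≠ ∞) {a b s : ℝ} (hs : 0 ≤ s) (c : ℝ) :
    IsClosed {f : Lp E p (volume.restrict (Ioo a b)) |
      ∫ u in Ioo a (b - s), ‖f (u + s) - f u‖ ^ p.toReal ≤ c} := by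
  have hp0 : p ≠ 0 := (one_pos.trans_le Fact.out).ne'
  refine isClosed_setOf_integral_le c
    (fun f => (memLp_translate_sub (Lp.memLp f) hs).integrable_norm_rpow hp0 hp)
    (fun f u => by positivity) fun g f h => ?_
  filter_upwards [ae_restrict_and_translate h hs] with u ⟨hu, hus⟩
  exact (hus.sub hu).norm.rpow_const (.inr ENNReal.toReal_nonneg)

theorem exists_pos_nat_one_div_le {ε : ℝ} (hε : 0 < ε) : ∃ k : ℕ, 1 ≤ k ∧ 1 / (k : ℝ) ≤ ε := by
  obtain ⟨n, hn⟩ := exists_nat_one_div_lt hε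
  exact ⟨n + 1, n.succ_pos, by exact_mod_cast hn.le⟩

theorem stmt3_general {X F : Type*} [PseudoMetricSpace X] [CompactSpace X] [NormedAddCommGroup F]
    [NormedSpace ℝ F] [ProperSpace F] {p : ℝ≥0∞} [Fact (1 ≤ p)] (hp : p ≠ ∞) (M : ℝ) (η h : ℕ → ℝ)
    (hη : ∀ k : ℕ, 1 ≤ k → 0 < η k) (hh : ∀ k : ℕ, 1 ≤ k → 0 < h k) :
    IsCompact {f : Lp C(X, F) p (volume.restrict (Ioo (0 : ℝ) 1)) |
      (∫ u in Ioo (0 : ℝ) 1, ‖f u‖ ^ p.toReal ≤ M) ∧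
      (∀ k : ℕ, 1 ≤ k → ∫ u in Ioo (0 : ℝ) 1, modulusOfContinuity (η k) (f u) ≤ 1 / (k : ℝ)) ∧
      (∀ k : ℕ, 1 ≤ k → ∀ h' : ℝ, 0 < h' → h' < h k →
        ∫ u in Ioo (0 : ℝ) (1 - h'), ‖f (u + h') - f u‖ ^ p.toReal ≤ 1 / (k : ℝ))} := by
  have hp1 : 1 ≤ p := Fact.out
  have hq : 1 ≤ p.toReal := by simpa using ENNReal.toReal_mono hp hp1
  have hpow (f : Lp C(X, F) p (volume.restrict (Ioo (0 : ℝ) 1))) :=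
    (Lp.memLp f).integrable_norm_rpow (one_pos.trans_le hp1).ne' hp
  refine TotallyBounded.isCompact_of_isClosed ?_ ?_
  · refine totallyBounded_of_modulusOfContinuity_of_translation hp
      (fun f hf => (integral_norm_le_measureReal_add hq (hpow f)).trans
        (add_le_add_right hf.1 _)) (fun ε hε => ?_) (fun ε hε => ?_)
    all_goals obtain ⟨k, hk, hkε⟩ := exists_pos_nat_one_div_le hε
    · exact ⟨η k, hη k hk, fun f hf => (hf.2.1 k hk).trans hkε⟩
    · exact ⟨h k, hh k hk, fun f hf s hs => (hf.2.2 k hk s hs.1 hs.2).trans hkε⟩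
  · simp only [ofPred_and, ofPred_forall]
    refine .inter ?_ (.inter ?_ ?_)
    · have hcont : Continuous fun g : C(X, F) => ‖g‖ ^ p.toReal :=
        continuous_norm.rpow_const fun _ => .inr ENNReal.toReal_nonneg
      exact isClosed_setOf_integral_comp_le M hcont (fun _ => by positivity) hpow
    · exact isClosed_iInter fun k => isClosed_iInter fun _ => isClosed_setOf_integral_comp_le _
        (lipschitzWith_modulusOfContinuity _).continuous (modulusOfContinuity_nonneg _) fun f =>
          integrable_modulusOfContinuity ((Lp.memLp f).integrable hp1) _
    · exact isClosed_iInter fun k => isClosed_iInter fun _ => isClosed_iInter fun s =>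
        isClosed_iInter fun hs => isClosed_iInter fun _ =>
          isClosed_setOf_integral_translate_sub_le hp hs.le _

/-- Fix `T > 0`, `M > 0`, and sequences `(η_k)_{k≥1}`, `(h_k)_{k≥1}` of
positive reals. The set `K` of all `f ∈ L²((0,1); C([0,T],ℝ))` satisfying
(L1) `∫₀¹ ‖f(u)‖²_{C[0,T]} du ≤ M`;
(L2) for every `k ≥ 1`,
  `∫₀¹ sup{|f(u)(t₂) − f(u)(t₁)| : |t₂ − t₁| < η_k} du ≤ 1/k`;
(L3) for every `k ≥ 1` and every `h ∈ (0, h_k)`,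
  `∫₀^{1−h} ‖f(u+h) − f(u)‖²_{C[0,T]} du ≤ 1/k`
is a compact subset of `L²((0,1); C([0,T],ℝ))`. -/
theorem stmt3 (T : ℝ) (hT : 0 < T) (M : ℝ) (hM : 0 < M)
    (η h : ℕ → ℝ) (hη : ∀ k : ℕ, 1 ≤ k → 0 < η k) (hh : ∀ k : ℕ, 1 ≤ k → 0 < h k) :
    IsCompact {f : Lp C(Set.Icc (0:ℝ) T, ℝ) 2 (volume.restrict (Set.Ioo (0:ℝ) 1)) |
      (∫ u in Set.Ioo (0:ℝ) 1, ‖f u‖ ^ 2 ≤ M) ∧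
      (∀ k : ℕ, 1 ≤ k →
        ∫ u in Set.Ioo (0:ℝ) 1,
          sSup {x : ℝ | ∃ t₁ t₂ : Set.Icc (0:ℝ) T,
            |(t₂ : ℝ) - (t₁ : ℝ)| < η k ∧ x = |f u t₂ - f u t₁|} ≤ 1 / (k : ℝ)) ∧
      (∀ k : ℕ, 1 ≤ k → ∀ h' : ℝ, 0 < h' → h' < h k →
        ∫ u in Set.Ioo (0:ℝ) (1 - h'), ‖f (u + h') - f u‖ ^ 2 ≤ 1 / (k : ℝ))} := by
  simpa only [ENNReal.toReal_ofNat, Real.rpow_ofNat, modulusOfContinuity, Subtype.dist_eq,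
    Real.dist_eq, Real.norm_eq_abs] using
    stmt3_general (X := Set.Icc (0 : ℝ) T) (F := ℝ) (p := 2) ENNReal.ofNat_ne_top M η h hη hh
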